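/- Let P be a preference profile with linear preference orders over a finite set A of alternatives, let L be an agenda over A, let k ≥ 0 be an integer and p ∈ A. There exists a list of k linear orders over A whose addition to P makes p the successive winner under L if and only if adding k voters each having a linear order that ranks p first (with the remaining alternatives in an arbitrary fixed order) makes p the successive winner under L; in particular, whether this succeeds does not depend on how the manipulators order the alternatives other than p. -/

import Mathlib

open scoped Classical

/-- The number of voters in profile `prof` who strictly prefer `b` to `c`. -/
noncomputable def prefCount {α : Type*} {n : ℕ} (prof : Fin n → α → α → Prop) (b c : α) : ℕ :=
  (Finset.univ.filter fun i => prof i b c).card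

/-- Alternative `b` beats alternative `c`: more than `n/2` voters prefer `b` to `c`. -/
def Beats {α : Type*} {n : ℕ} (prof : Fin n → α → α → Prop) (b c : α) : Prop :=
  2 * prefCount prof b c > n

/-- `a` is an `S`-majority winner: more than `n/2` voters prefer `a`
to every alternative of `S \ {a}`. -/
def IsMajWinner {α : Type*} {n : ℕ} (prof : Fin n → α → α → Prop) (S : Finset α) (a : α) :
    Prop :=
  2 * (Finset.univ.filter fun i => ∀ c ∈ S, c ≠ a → prof i a c).card > n

/-- The successive winner for the agenda given as a list: the first alternative of the
agenda that is a majority winner with respect to itself and all later alternatives. -/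
noncomputable def succWinner {α : Type*} [DecidableEq α] {n : ℕ}
    (prof : Fin n → α → α → Prop) : List α → Option α
  | [] => none
  | a :: rest =>
    if IsMajWinner prof ((a :: rest).toFinset) a then some a
    else succWinner prof rest

/-- The amendment winner for the agenda given as a list: the current round winner is
challenged by the next alternative on the agenda, which takes over if it beats it. -/
noncomputable def amendWinner {α : Type*} {n : ℕ}
    (prof : Fin n → α → α → Prop) : List α → Option α
  | [] => none
  | a :: rest => some (rest.foldl (fun win c => if Beats prof c win then c else win) a)

theorem majWinner_mono {α : Type*} {n : ℕ} (P Q : Fin n → α → α → Prop) (S : Finset α) (a : α)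
    (h : ∀ i, (∀ c ∈ S, c ≠ a → P i a c) → (∀ c ∈ S, c ≠ a → Q i a c)) :
    IsMajWinner P S a → IsMajWinner Q S a := by
  unfold IsMajWinner
  intro hP
  have : (Finset.univ.filter fun i => ∀ c ∈ S, c ≠ a → P i a c).card ≤
      (Finset.univ.filter fun i => ∀ c ∈ S, c ≠ a → Q i a c).card := by
    apply Finset.card_le_card
    intro i hi
    rw [Finset.mem_filter] at hi ⊢
    exact ⟨hi.1, h i hi.2⟩
  omega

theorem succWinner_mem {α : Type*} [DecidableEq α] {n : ℕ} (P : Fin n → α → α → Prop)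
    (L : List α) (p : α) (h : succWinner P L = some p) : p ∈ L := by
  induction L with
  | nil => simp [succWinner] at h
  | cons a rest ih =>
    rw [succWinner] at h
    split_ifs at h with h1
    · simp at h; simp [h]
    · exact List.mem_cons_of_mem _ (ih h)

theorem succWinner_push {α : Type*} [DecidableEq α] {n k : ℕ} (prof : Fin n → α → α → Prop)
    (man : Fin k → α → α → Prop) (r : α → α → Prop) (hr : IsStrictTotalOrder α r) (p : α)
    (hp : ∀ c : α, c ≠ p → r p c) (L : List α) (hnodup : L.Nodup)
    (h : succWinner (Fin.append prof man) L = some p) :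
    succWinner (Fin.append prof (fun _ : Fin k => r)) L = some p := by
  induction L with
  | nil => simp [succWinner] at h
  | cons a rest ih =>
    rw [List.nodup_cons] at hnodup
    rw [succWinner] at h ⊢
    by_cases hap : a = p
    · subst hap
      split_ifs at h with h1
      · rw [if_pos]
        refine majWinner_mono _ _ _ _ ?_ h1
        intro i
        refine Fin.addCases (fun i => ?_) (fun i => ?_) i
        · simp only [Fin.append_left]; exact id
        · simp only [Fin.append_right]; exact fun _ c _ hc => hp c hc
      · exact absurd (succWinner_mem _ _ _ h) hnodup.1
    · split_ifs at h with h1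
      · exact absurd (Option.some.inj h) hap
      · rw [if_neg]
        · exact ih hnodup.2 h
        · intro h2
          apply h1
          refine majWinner_mono _ _ _ _ ?_ h2
          intro i
          refine Fin.addCases (fun i => ?_) (fun i => ?_) i
          · simp only [Fin.append_left]; exact id
          · simp only [Fin.append_right]
            intro h3
            have hm := succWinner_mem _ _ _ h
            have h4 := h3 p (by simp [hm]) (Ne.symm hap)
            exact absurd (_root_.trans h4 (hp a hap)) (irrefl a)

theorem exists_order_top {α : Type*} [Fintype α] (p : α) :
    ∃ r : α → α → Prop, IsStrictTotalOrder α r ∧ ∀ c : α, c ≠ p → r p c := by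
  let f : α → ℕ := fun a => if a = p then 0 else (Fintype.equivFin α a : ℕ) + 1
  have hf : Function.Injective f := by
    intro a b hab
    simp only [f] at hab
    split_ifs at hab with h1 h2
    · rw [h1, h2]
    · exact (Fintype.equivFin α).injective (Fin.ext (by omega))
  refine ⟨fun a b => f a < f b, ?_, ?_⟩
  · exact
      { trichotomous := fun a b h1 h2 => hf (by omega)
        irrefl := fun a => lt_irrefl (f a)
        trans := fun a b c h1 h2 => lt_trans h1 h2 }
  · intro c hc
    simp [f, hc]

/-- A successful manipulation of the successive procedure by `k` voters exists iff letting
all `k` manipulators cast any linear order that ranks `p` first makes `p` the successive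
winner; in particular success does not depend on how the manipulators order the
alternatives other than `p`. -/
theorem stmt7 {α : Type*} [Fintype α] [DecidableEq α] {n : ℕ}
    (prof : Fin n → α → α → Prop)
    (hlin : ∀ i, IsStrictTotalOrder α (prof i))
    (L : List α) (hnodup : L.Nodup) (hcomplete : ∀ a : α, a ∈ L)
    (k : ℕ) (p : α) :
    (∃ man : Fin k → α → α → Prop, (∀ j, IsStrictTotalOrder α (man j)) ∧
        succWinner (Fin.append prof man) L = some p) ↔
    (∀ r : α → α → Prop, IsStrictTotalOrder α r → (∀ c : α, c ≠ p → r p c) →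
        succWinner (Fin.append prof (fun _ : Fin k => r)) L = some p) := by
  constructor
  · rintro ⟨man, -, h⟩ r hr hp
    exact succWinner_push prof man r hr p hp L hnodup h
  · intro h
    obtain ⟨r, hr, hp⟩ := exists_order_top p
    exact ⟨fun _ => r, fun _ => hr, h r hr hp⟩
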